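/- For every α with 0 < α ≤ π/3 there is a constant c = c(α) > 0 with the following property. For every finite family (Δ_i)_{i ∈ I} of α-fat triangles in ℝ² with |I| = n ≥ 1, there exists a partition 𝒫 of the index set I such that: (a) each part P ∈ 𝒫 is stabbed, i.e. there is a point contained in every triangle Δ_i with i ∈ P; and (b) for every point x ∈ ℝ², the number of parts P ∈ 𝒫 whose union ⋃_{i∈P} Δ_i contains x is at most c · (log₂ n + 1). -/

import Mathlib

/-!
Fatness enters only through the following consequence (`IsFatTriangle.exists_ball`): the triangle
is convex, contains a ball of radius `κ * d` and lies in the concentric ball of radius `d`, where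
`κ = sin² α / 9`. Two ingredients then give the theorem.

*Shifted quadtrees.* Take dyadic square grids of mesh `R / 2 ^ k` with origin in `{0, R / 3}²`.
For each triangle one of these four origins admits a dyadic cell that contains the triangle and
whose side is at most `14 * d` (`exists_shift`). Treating the four origins separately, every
triangle `T i` lies in a cell `Q i` of comparable size, and the cells form a laminar family.
Moreover all triangles whose size is at least a constant times the side of a square and which meet
that square are stabbed by `N = N(α)` points: shrinking such a triangle towards a point of the
square yields a ball of radius comparable to the side, so a fine finite net suffices
(`exists_stabbing_points`).

*Halving.* In a laminar family where each cell contains fewer than `2 ^ (m + 1)` of the cells `Q i`,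
call a cell heavy if it contains at least `2 ^ m` of them. Below every heavy cell there is a unique
minimal heavy cell. The triangles assigned to a heavy cell and meeting the minimal heavy cell below
it are stabbed by `N` points. Among the remaining triangles, those inside minimal heavy cells and
those outside never share a point, and both classes have fewer than `2 ^ m` cells inside any cell.
So each halving costs `N` parts per point and there are at most `log₂ n + 1` of them
(`exists_cover_of_laminar`). It is convenient to build a cover by stabbed sets rather than a
partition; shrinking the members of a cover to make them disjoint does not increase the number of
parts met by a point (`exists_finpartition_of_cover`).
-/

open Metric

/-- An `α`-fat triangle in the Euclidean plane: the convex hull of three affinely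
independent points, each of whose interior angles is at least `α`. -/
def IsFatTriangle (α : ℝ) (Δ : Set (EuclideanSpace ℝ (Fin 2))) : Prop :=
  ∃ u v w : EuclideanSpace ℝ (Fin 2),
    AffineIndependent ℝ ![u, v, w] ∧
    Δ = convexHull ℝ {u, v, w} ∧
    α ≤ EuclideanGeometry.angle w u v ∧
    α ≤ EuclideanGeometry.angle u v w ∧
    α ≤ EuclideanGeometry.angle v w u

/-! ### Covers and partitions -/

/-- A cover by stabbed sets can be turned into a partition by assigning each index to one member
of the cover containing it. -/
lemma exists_finpartition_of_cover {ι E : Type*} [Fintype ι] [DecidableEq ι] (T : ι → Set E)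
    (F : Set (Finset ι)) (hF : F.Finite) (hcov : ∀ i, ∃ P ∈ F, i ∈ P)
    (hst : ∀ P ∈ F, ∃ x, ∀ i ∈ P, x ∈ T i) (B : ℕ)
    (hply : ∀ x, {P ∈ F | ∃ i ∈ P, x ∈ T i}.ncard ≤ B) :
    ∃ Part : Finpartition (Finset.univ : Finset ι),
      (∀ P ∈ Part.parts, ∃ x, ∀ i ∈ P, x ∈ T i) ∧
      (∀ x, {P : Finset ι | P ∈ Part.parts ∧ ∃ i ∈ P, x ∈ T i}.ncard ≤ B) := by
  classical
  choose g hgF hg using hcov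
  set cls : Finset ι → Finset ι := fun A => {k | g k = A}
  have hcls : ∀ P ∈ (Finpartition.ofSetoid (Setoid.ker g)).parts, ∀ i ∈ P, P = cls (g i) := by
    intro P hP i hi
    rw [← Finpartition.part_eq_of_mem _ hP hi]
    ext k
    rw [Finpartition.mem_part_ofSetoid_iff_rel, Setoid.ker_def, Finset.mem_filter]
    exact ⟨fun h => ⟨Finset.mem_univ _, h.symm⟩, fun h => h.2.symm⟩
  refine ⟨Finpartition.ofSetoid (Setoid.ker g), fun P hP => ?_, fun x => ?_⟩
  · obtain ⟨i, hi⟩ := Finpartition.nonempty_of_mem_parts _ hP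
    obtain ⟨x, hx⟩ := hst (g i) (hgF i)
    refine ⟨x, fun k hk => hx k ?_⟩
    rw [hcls P hP i hi] at hk
    rw [← (Finset.mem_filter.1 hk).2]
    exact hg k
  · have hfin : {P ∈ F | ∃ i ∈ P, x ∈ T i}.Finite := hF.subset (Set.sep_subset _ _)
    refine le_trans ?_ (hply x)
    refine le_trans (Set.ncard_le_ncard ?_ (hfin.image cls)) (Set.ncard_image_le hfin)
    rintro P ⟨hP, i, hi, hxi⟩
    exact ⟨g i, ⟨hgF i, i, hg i, hxi⟩, (hcls P hP i hi).symm⟩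

/-! ### The halving argument -/

/-- The halving argument for sets `T i` assigned to members `Q i` of a laminar family. The set
`S A` stabs every `T i` that meets the cell `A` and is assigned to a cell containing `A`. If each
cell contains fewer than `2 ^ m` of the assigned cells, the `T i` can be covered by stabbed
subfamilies so that every point meets at most `N * m` of them. -/
lemma exists_cover_of_laminar {ι E : Type*} (T Q : ι → Set E) (S : Set E → Finset E) (N : ℕ)
    (hN : ∀ A, (S A).card ≤ N) (m : ℕ) : ∀ s : Finset ι,
    (∀ i ∈ s, T i ⊆ Q i) → (∀ i ∈ s, (T i).Nonempty) →
    (∀ i ∈ s, ∀ j ∈ s, ((Q i) ∩ (Q j)).Nonempty → Q i ⊆ Q j ∨ Q j ⊆ Q i) →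
    (∀ i ∈ s, ∀ j ∈ s, Q j ⊆ Q i → ((T i) ∩ (Q j)).Nonempty → ∃ p ∈ S (Q j), p ∈ T i) →
    (∀ i ∈ s, {k ∈ (s : Set ι) | Q k ⊆ Q i}.ncard < 2 ^ m) →
    ∃ F : Set (Finset ι), F.Finite ∧ (∀ P ∈ F, P ⊆ s) ∧ (∀ i ∈ s, ∃ P ∈ F, i ∈ P) ∧
      (∀ P ∈ F, ∃ x, ∀ i ∈ P, x ∈ T i) ∧
      (∀ x, {P ∈ F | ∃ i ∈ P, x ∈ T i}.ncard ≤ N * m) := by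
  classical
  induction m with
  | zero =>
    intro s _ _ _ _ hc
    refine ⟨∅, Set.finite_empty, by simp, ?_, by simp, by simp⟩
    intro i hi
    have h := hc i hi
    rw [pow_zero, Nat.lt_one_iff, Set.ncard_eq_zero (s.finite_toSet.subset (Set.sep_subset _ _))] at h
    exact absurd (show i ∈ {k ∈ (s : Set ι) | Q k ⊆ Q i} from ⟨hi, subset_rfl⟩)
      (h ▸ Set.notMem_empty i)
  | succ m ih =>
    intro s hTQ hne hlam hS hc
    have hfin : ∀ p : ι → Prop, {k ∈ (s : Set ι) | p k}.Finite := fun p =>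
      s.finite_toSet.subset (Set.sep_subset _ _)
    set heavy : ι → Prop := fun i => i ∈ s ∧ 2 ^ m ≤ {k ∈ (s : Set ι) | Q k ⊆ Q i}.ncard
    -- `bot j`: the cell `Q j` is a minimal heavy cell
    set bot : ι → Prop := fun j => heavy j ∧ ∀ k, heavy k → Q k ⊆ Q j → Q j ⊆ Q k
    have hex : ∀ i, heavy i → ∃ j, bot j ∧ Q j ⊆ Q i := by
      intro i hi
      obtain ⟨j, hj, hmin⟩ := Set.exists_min_image {k ∈ (s : Set ι) | heavy k ∧ Q k ⊆ Q i}
        (fun k => {l ∈ (s : Set ι) | Q l ⊆ Q k}.ncard) (hfin _) ⟨i, hi.1, hi, subset_rfl⟩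
      refine ⟨j, ⟨hj.2.1, fun k hk hkj => ?_⟩, hj.2.2⟩
      have h1 := hmin k ⟨hk.1, hk, hkj.trans hj.2.2⟩
      have h2 : {l ∈ (s : Set ι) | Q l ⊆ Q k} = {l ∈ (s : Set ι) | Q l ⊆ Q j} :=
        Set.eq_of_subset_of_ncard_le (fun l hl => ⟨hl.1, hl.2.trans hkj⟩) h1 (hfin _)
      have h3 : j ∈ {l ∈ (s : Set ι) | Q l ⊆ Q j} := ⟨hj.1, subset_rfl⟩
      rw [← h2] at h3
      exact h3.2
    -- two disjoint heavy cells inside one cell would contain at least `2 ^ (m + 1)` cells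
    have huniq : ∀ i ∈ s, ∀ j j', bot j → bot j' → Q j ⊆ Q i → Q j' ⊆ Q i → Q j = Q j' := by
      intro i hi j j' hj hj' hji hji'
      by_cases hd : ((Q j) ∩ (Q j')).Nonempty
      · rcases hlam j hj.1.1 j' hj'.1.1 hd with h | h
        · exact h.antisymm (hj'.2 j hj.1 h)
        · exact (hj.2 j' hj'.1 h).antisymm h
      · exfalso
        have hdis : Disjoint {k ∈ (s : Set ι) | Q k ⊆ Q j} {k ∈ (s : Set ι) | Q k ⊆ Q j'} := by
          rw [Set.disjoint_left]
          rintro k hk hk'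
          obtain ⟨y, hy⟩ := hne k hk.1
          exact hd ⟨y, hk.2 (hTQ k hk.1 hy), hk'.2 (hTQ k hk.1 hy)⟩
        have h1 := Set.ncard_union_eq hdis (hfin _) (hfin _)
        have h2 : ({k ∈ (s : Set ι) | Q k ⊆ Q j} ∪ {k ∈ (s : Set ι) | Q k ⊆ Q j'}).ncard ≤
            {k ∈ (s : Set ι) | Q k ⊆ Q i}.ncard := by
          refine Set.ncard_le_ncard ?_ (hfin _)
          rintro k (hk | hk)
          · exact ⟨hk.1, hk.2.trans hji⟩
          · exact ⟨hk.1, hk.2.trans hji'⟩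
        have h3 := hc i hi
        have h4 := hj.1.2
        have h5 := hj'.1.2
        rw [pow_succ] at h3
        omega
    -- `mid i`: `T i` meets a minimal heavy cell below its own cell, hence is stabbed by `S`
    set mid : ι → Prop := fun i => ∃ j, bot j ∧ Q j ⊆ Q i ∧ ((T i) ∩ (Q j)).Nonempty
    set inner : Finset ι := {i ∈ s | ¬ mid i ∧ ∃ j, bot j ∧ Q i ⊆ Q j}
    set outer : Finset ι := {i ∈ s | ¬ mid i ∧ ¬ ∃ j, bot j ∧ Q i ⊆ Q j}
    have hin : inner ⊆ s := Finset.filter_subset _ _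
    have hout : outer ⊆ s := Finset.filter_subset _ _
    obtain ⟨F₁, hF₁, hsub₁, hcov₁, hst₁, hply₁⟩ := ih inner (fun i hi => hTQ i (hin hi))
      (fun i hi => hne i (hin hi)) (fun i hi j hj => hlam i (hin hi) j (hin hj))
      (fun i hi j hj => hS i (hin hi) j (hin hj)) (by
        intro i hi
        obtain ⟨his, hnm, j, hj, hij⟩ := Finset.mem_filter.1 hi
        by_contra hcon
        push Not at hcon
        have hi_heavy : heavy i := by
          refine ⟨his, hcon.trans (Set.ncard_le_ncard ?_ (hfin _))⟩
          exact fun k hk => ⟨hin hk.1, hk.2⟩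
        have hji := hj.2 i hi_heavy hij
        obtain ⟨y, hy⟩ := hne i his
        exact hnm ⟨j, hj, hji, y, hy, hij (hTQ i his hy)⟩)
    obtain ⟨F₂, hF₂, hsub₂, hcov₂, hst₂, hply₂⟩ := ih outer (fun i hi => hTQ i (hout hi))
      (fun i hi => hne i (hout hi)) (fun i hi j hj => hlam i (hout hi) j (hout hj))
      (fun i hi j hj => hS i (hout hi) j (hout hj)) (by
        intro i hi
        obtain ⟨his, -, -⟩ := Finset.mem_filter.1 hi
        have hsub : {k ∈ (outer : Set ι) | Q k ⊆ Q i} ⊆ {k ∈ (s : Set ι) | Q k ⊆ Q i} :=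
          fun k hk => ⟨hout hk.1, hk.2⟩
        by_cases hh : heavy i
        · obtain ⟨j, hj, hji⟩ := hex i hh
          have hdis : Disjoint {k ∈ (outer : Set ι) | Q k ⊆ Q i}
              {k ∈ (s : Set ι) | Q k ⊆ Q j} := by
            rw [Set.disjoint_left]
            intro k hk hk'
            exact (Finset.mem_filter.1 hk.1).2.2 ⟨j, hj, hk'.2⟩
          have h1 := Set.ncard_union_eq hdis ((hfin _).subset hsub) (hfin _)
          have h2 : ({k ∈ (outer : Set ι) | Q k ⊆ Q i} ∪ {k ∈ (s : Set ι) | Q k ⊆ Q j}).ncard ≤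
              {k ∈ (s : Set ι) | Q k ⊆ Q i}.ncard := by
            refine Set.ncard_le_ncard (Set.union_subset hsub ?_) (hfin _)
            exact fun k hk => ⟨hk.1, hk.2.trans hji⟩
          have h3 := hc i his
          have h4 := hj.1.2
          rw [pow_succ] at h3
          omega
        · refine (Set.ncard_le_ncard hsub (hfin _)).trans_lt ?_
          by_contra hcon
          push Not at hcon
          exact hh ⟨his, hcon⟩)
    set part : Set E → E → Finset ι := fun A p => {i ∈ s | A ⊆ Q i ∧ p ∈ T i}
    set F₀ : Set (Finset ι) := {P | ∃ j, bot j ∧ ∃ p ∈ S (Q j), P = part (Q j) p}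
    have hF₀fin : F₀.Finite := by
      refine (s.powerset.finite_toSet).subset ?_
      rintro P ⟨j, -, p, -, rfl⟩
      exact Finset.mem_coe.2 (Finset.mem_powerset.2 (Finset.filter_subset _ _))
    refine ⟨F₀ ∪ (F₁ ∪ F₂), hF₀fin.union (hF₁.union hF₂), ?_, ?_, ?_, ?_⟩
    · rintro P (⟨j, -, p, -, rfl⟩ | hP | hP)
      · exact Finset.filter_subset _ _
      · exact (hsub₁ P hP).trans hin
      · exact (hsub₂ P hP).trans hout
    · intro i hi
      by_cases hm : mid i
      · obtain ⟨j, hj, hji, hmeet⟩ := hm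
        obtain ⟨p, hp, hpT⟩ := hS i hi j hj.1.1 hji hmeet
        exact ⟨_, Or.inl ⟨j, hj, p, hp, rfl⟩, Finset.mem_filter.2 ⟨hi, hji, hpT⟩⟩
      · by_cases hi' : ∃ j, bot j ∧ Q i ⊆ Q j
        · obtain ⟨P, hP, hiP⟩ := hcov₁ i (Finset.mem_filter.2 ⟨hi, hm, hi'⟩)
          exact ⟨P, Or.inr (Or.inl hP), hiP⟩
        · obtain ⟨P, hP, hiP⟩ := hcov₂ i (Finset.mem_filter.2 ⟨hi, hm, hi'⟩)
          exact ⟨P, Or.inr (Or.inr hP), hiP⟩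
    · rintro P (⟨j, -, p, -, rfl⟩ | hP | hP)
      · exact ⟨p, fun i hi => (Finset.mem_filter.1 hi).2.2⟩
      · exact hst₁ P hP
      · exact hst₂ P hP
    · intro x
      set hit : Set (Finset ι) → Set (Finset ι) := fun F => {P ∈ F | ∃ i ∈ P, x ∈ T i}
      have hsplit : hit (F₀ ∪ (F₁ ∪ F₂)) ⊆ hit F₀ ∪ (hit F₁ ∪ hit F₂) := by
        rintro P ⟨h | h | h, hx⟩
        · exact Or.inl ⟨h, hx⟩
        · exact Or.inr (Or.inl ⟨h, hx⟩)
        · exact Or.inr (Or.inr ⟨h, hx⟩)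
      have hfin' : ∀ F, F.Finite → (hit F).Finite := fun F hF => hF.subset (Set.sep_subset _ _)
      have h0 : (hit F₀).ncard ≤ N := by
        by_cases hemp : (hit F₀).Nonempty
        · obtain ⟨P, ⟨j, hj, p, hp, rfl⟩, i, hi, hxi⟩ := hemp
          obtain ⟨his, hji, -⟩ := Finset.mem_filter.1 hi
          have : hit F₀ ⊆ Set.image (part (Q j)) (S (Q j) : Set E) := by
            rintro P ⟨⟨j', hj', p', hp', rfl⟩, i', hi', hxi'⟩
            obtain ⟨his', hji', -⟩ := Finset.mem_filter.1 hi'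
            have hjj : Q j = Q j' := by
              rcases hlam i his i' his' ⟨x, hTQ i his hxi, hTQ i' his' hxi'⟩ with h | h
              · exact huniq i' his' j j' hj hj' (hji.trans h) hji'
              · exact huniq i his j j' hj hj' hji (hji'.trans h)
            rw [hjj]
            exact ⟨p', hp', rfl⟩
          calc (hit F₀).ncard ≤ (Set.image (part (Q j)) (S (Q j) : Set E)).ncard :=
                Set.ncard_le_ncard this ((S (Q j)).finite_toSet.image _)
            _ ≤ (S (Q j) : Set E).ncard := Set.ncard_image_le (S (Q j)).finite_toSet
            _ ≤ N := by rw [Set.ncard_coe_finset]; exact hN _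
        · rw [Set.not_nonempty_iff_eq_empty.1 hemp]; simp
      have h12 : (hit F₁ ∪ hit F₂).ncard ≤ N * m := by
        by_cases hx : ∃ j, bot j ∧ x ∈ Q j
        · have h2 : hit F₂ = ∅ := by
            rw [Set.eq_empty_iff_forall_notMem]
            rintro P ⟨hP, i, hi, hxi⟩
            obtain ⟨j, hj, hxj⟩ := hx
            obtain ⟨his, hnm, hno⟩ := Finset.mem_filter.1 (hsub₂ P hP hi)
            rcases hlam i his j hj.1.1 ⟨x, hTQ i his hxi, hxj⟩ with h | h
            · exact hno ⟨j, hj, h⟩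
            · exact hnm ⟨j, hj, h, x, hxi, hxj⟩
          rw [h2, Set.union_empty]
          exact hply₁ x
        · have h1 : hit F₁ = ∅ := by
            rw [Set.eq_empty_iff_forall_notMem]
            rintro P ⟨hP, i, hi, hxi⟩
            obtain ⟨his, -, j, hj, hij⟩ := Finset.mem_filter.1 (hsub₁ P hP hi)
            exact hx ⟨j, hj, hij (hTQ i his hxi)⟩
          rw [h1, Set.empty_union]
          exact hply₂ x
      calc (hit (F₀ ∪ (F₁ ∪ F₂))).ncard ≤ (hit F₀ ∪ (hit F₁ ∪ hit F₂)).ncard :=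
            Set.ncard_le_ncard hsplit
              ((hfin' _ hF₀fin).union ((hfin' _ hF₁).union (hfin' _ hF₂)))
        _ ≤ (hit F₀).ncard + (hit F₁ ∪ hit F₂).ncard := Set.ncard_union_le _ _
        _ ≤ N * (m + 1) := by rw [mul_add, mul_one]; omega

/-! ### Fat triangles contain large balls -/

lemma sin_angle_mul_norm_eq_abs_det (p q : EuclideanSpace ℝ (Fin 2)) :
    Real.sin (InnerProductGeometry.angle p q) * (‖p‖ * ‖q‖) = |p 0 * q 1 - p 1 * q 0| := by
  rw [InnerProductGeometry.sin_angle_mul_norm_mul_norm, ← Real.sqrt_sq_eq_abs]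
  congr 1
  simp only [EuclideanSpace.inner_eq_star_dotProduct, dotProduct, Fin.sum_univ_two, Pi.star_apply,
    star_trivial]
  ring

lemma abs_det_le (p q : EuclideanSpace ℝ (Fin 2)) :
    |p 0 * q 1 - p 1 * q 0| ≤ ‖p‖ * ‖q‖ := by
  rw [← sin_angle_mul_norm_eq_abs_det]
  exact mul_le_of_le_one_left (by positivity) (Real.sin_le_one _)

/-- A point close to the centroid lies in the triangle: up to sign, the barycentric coordinates of
the centroid plus `e` differ from `1 / 3` by the determinants of `e` with the side vectors, divided
by the determinant `D` of the triangle. -/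
lemma mem_convexHull_of_det {u v w p : EuclideanSpace ℝ (Fin 2)} {D : ℝ}
    (hD : D = (v 0 - u 0) * (w 1 - u 1) - (v 1 - u 1) * (w 0 - u 0)) (hD0 : D ≠ 0)
    (e : EuclideanSpace ℝ (Fin 2)) (hp : p = (1 / 3 : ℝ) • (u + v + w) + e)
    (h1 : ‖e‖ * ‖w - v‖ ≤ |D| / 3) (h2 : ‖e‖ * ‖w - u‖ ≤ |D| / 3)
    (h3 : ‖e‖ * ‖v - u‖ ≤ |D| / 3) : p ∈ convexHull ℝ {u, v, w} := by
  have key : ∀ x : EuclideanSpace ℝ (Fin 2), ‖e‖ * ‖x‖ ≤ |D| / 3 →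
      |(e 0 * x 1 - e 1 * x 0) / D| ≤ 1 / 3 := by
    intro x hx
    rw [abs_div, div_le_iff₀ (abs_pos.2 hD0)]
    exact (abs_det_le e x).trans (hx.trans_eq (by ring))
  have k1 := abs_le.1 (key _ h1)
  have k2 := abs_le.1 (key _ h2)
  have k3 := abs_le.1 (key _ h3)
  set a1 := (e 0 * (w - v) 1 - e 1 * (w - v) 0) / D with ha1
  set a2 := (e 0 * (w - u) 1 - e 1 * (w - u) 0) / D with ha2
  set a3 := (e 0 * (v - u) 1 - e 1 * (v - u) 0) / D with ha3
  simp only [PiLp.sub_apply] at ha1 ha2 ha3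
  have hmem := (convex_convexHull ℝ ({u, v, w} : Set (EuclideanSpace ℝ (Fin 2)))).sum_mem
    (t := Finset.univ) (w := ![1 / 3 - a1, 1 / 3 + a2, 1 / 3 - a3]) (z := ![u, v, w])
    (by intro i _; fin_cases i <;> simp <;> linarith)
    (by
      simp [Fin.sum_univ_three]
      rw [ha1, ha2, ha3]; field_simp; ring)
    (by intro i _; apply subset_convexHull; fin_cases i <;> simp)
  convert hmem using 1
  rw [hp, Fin.sum_univ_three]
  ext i
  fin_cases i
  · simp
    rw [ha1, ha2, ha3]; field_simp; rw [hD]; ring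
  · simp
    rw [ha1, ha2, ha3]; field_simp; rw [hD]; ring

/-- The two balls are centred at the centroid, and `d` is the perimeter. The fatness bounds every
side from below by `sin α / 3` times the perimeter, and every altitude by `sin α` times a side. -/
lemma IsFatTriangle.exists_ball {α : ℝ} (hα0 : 0 < α) {Δ : Set (EuclideanSpace ℝ (Fin 2))}
    (h : IsFatTriangle α Δ) : ∃ (z : EuclideanSpace ℝ (Fin 2)) (d : ℝ), 0 < d ∧ Convex ℝ Δ ∧
      closedBall z (Real.sin α ^ 2 / 9 * d) ⊆ Δ ∧ Δ ⊆ closedBall z d := by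
  obtain ⟨u, v, w, hind, rfl, hA, hB, hC⟩ := h
  have hinj := hind.injective
  have huv : u ≠ v := fun h => by simpa using hinj (a₁ := 0) (a₂ := 1) (by simpa using h)
  have huw : u ≠ w := fun h => by simpa using hinj (a₁ := 0) (a₂ := 2) (by simpa using h)
  have hvw : v ≠ w := fun h => by simpa using hinj (a₁ := 1) (a₂ := 2) (by simpa using h)
  have hsum := EuclideanGeometry.angle_add_angle_add_angle_eq_pi w huv
  rw [EuclideanGeometry.angle_comm v u w, EuclideanGeometry.angle_comm u w v,
    EuclideanGeometry.angle_comm w v u] at hsum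
  have hsin : ∀ θ : ℝ, α ≤ θ → θ ≤ Real.pi - α → Real.sin α ≤ Real.sin θ := by
    intro θ h1 h2
    rcases le_total θ (Real.pi / 2) with h | h
    · exact Real.sin_le_sin_of_le_of_le_pi_div_two (by linarith) h h1
    · rw [← Real.sin_pi_sub θ]
      exact Real.sin_le_sin_of_le_of_le_pi_div_two (by linarith) (by linarith) (by linarith)
  have sA := hsin _ hA (by linarith)
  have sB := hsin _ hB (by linarith)
  have sC := hsin _ hC (by linarith)
  have hσ : 0 < Real.sin α := Real.sin_pos_of_pos_of_lt_pi hα0 (by linarith)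
  set D := (v 0 - u 0) * (w 1 - u 1) - (v 1 - u 1) * (w 0 - u 0) with hD
  have dA := sin_angle_mul_norm_eq_abs_det (w - u) (v - u)
  have dB := sin_angle_mul_norm_eq_abs_det (u - v) (w - v)
  have dC := sin_angle_mul_norm_eq_abs_det (v - w) (u - w)
  rw [EuclideanGeometry.angle] at sA sB sC
  simp only [vsub_eq_sub] at sA sB sC
  have eA : |(w - u) 0 * (v - u) 1 - (w - u) 1 * (v - u) 0| = |D| := by
    rw [← abs_neg]; congr 1; simp only [PiLp.sub_apply, hD]; ring
  have eB : |(u - v) 0 * (w - v) 1 - (u - v) 1 * (w - v) 0| = |D| := by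
    rw [← abs_neg]; congr 1; simp only [PiLp.sub_apply, hD]; ring
  have eC : |(v - w) 0 * (u - w) 1 - (v - w) 1 * (u - w) 0| = |D| := by
    rw [← abs_neg]; congr 1; simp only [PiLp.sub_apply, hD]; ring
  rw [eA] at dA
  rw [eB, norm_sub_rev u v] at dB
  rw [eC, norm_sub_rev v w, norm_sub_rev u w] at dC
  have pa : 0 < ‖w - v‖ := norm_pos_iff.2 (sub_ne_zero.2 hvw.symm)
  have pb : 0 < ‖w - u‖ := norm_pos_iff.2 (sub_ne_zero.2 huw.symm)
  have pc : 0 < ‖v - u‖ := norm_pos_iff.2 (sub_ne_zero.2 huv.symm)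
  set a := ‖w - v‖
  set b := ‖w - u‖
  set c := ‖v - u‖
  set σ := Real.sin α
  have lA := Real.sin_le_one (InnerProductGeometry.angle (w - u) (v - u))
  have lB := Real.sin_le_one (InnerProductGeometry.angle (u - v) (w - v))
  have lC := Real.sin_le_one (InnerProductGeometry.angle (v - w) (u - w))
  set sa := Real.sin (InnerProductGeometry.angle (w - u) (v - u))
  set sb := Real.sin (InnerProductGeometry.angle (u - v) (w - v))
  set sc := Real.sin (InnerProductGeometry.angle (v - w) (u - w))
  have hsa : 0 < sa := hσ.trans_le sA
  have hDpos : 0 < |D| := by rw [← dA]; positivity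
  have bA : σ * (b * c) ≤ |D| := by rw [← dA]; gcongr
  have bB : σ * (c * a) ≤ |D| := by rw [← dB]; gcongr
  have bC : σ * (a * b) ≤ |D| := by rw [← dC]; gcongr
  have tA : |D| ≤ b * c := by rw [← dA]; exact mul_le_of_le_one_left (by positivity) lA
  have tB : |D| ≤ c * a := by rw [← dB]; exact mul_le_of_le_one_left (by positivity) lB
  have tC : |D| ≤ a * b := by rw [← dC]; exact mul_le_of_le_one_left (by positivity) lC
  -- comparing two expressions for the area bounds the ratio of any two sides
  have rab : σ * b ≤ a := le_of_mul_le_mul_right (by linarith : σ * b * c ≤ a * c) pc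
  have rac : σ * c ≤ a := le_of_mul_le_mul_right (by linarith : σ * c * b ≤ a * b) pb
  have rba : σ * a ≤ b := le_of_mul_le_mul_right (by linarith : σ * a * c ≤ b * c) pc
  have rbc : σ * c ≤ b := le_of_mul_le_mul_right (by linarith : σ * c * a ≤ b * a) pa
  have rca : σ * a ≤ c := le_of_mul_le_mul_right (by linarith : σ * a * b ≤ c * b) pb
  have rcb : σ * b ≤ c := le_of_mul_le_mul_right (by linarith : σ * b * a ≤ c * a) pa
  have hσ1 : σ ≤ 1 := Real.sin_le_one _
  have mA : σ * a ≤ a := mul_le_of_le_one_left pa.le hσ1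
  have mB : σ * b ≤ b := mul_le_of_le_one_left pb.le hσ1
  have mC : σ * c ≤ c := mul_le_of_le_one_left pc.le hσ1
  have pA : σ * (a + b + c) ≤ 3 * a := by linarith
  have pB : σ * (a + b + c) ≤ 3 * b := by linarith
  have pC : σ * (a + b + c) ≤ 3 * c := by linarith
  refine ⟨(1 / 3 : ℝ) • (u + v + w), a + b + c, by positivity, convex_convexHull _ _, ?_, ?_⟩
  · intro p hp
    rw [mem_closedBall, dist_eq_norm] at hp
    refine mem_convexHull_of_det hD (abs_pos.1 hDpos) (p - (1 / 3 : ℝ) • (u + v + w)) (by abel)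
      ?_ ?_ ?_
    all_goals refine (mul_le_mul_of_nonneg_right hp (norm_nonneg _)).trans ?_
    · change σ ^ 2 / 9 * (a + b + c) * a ≤ _
      linarith [mul_le_mul_of_nonneg_right pB (by positivity : 0 ≤ σ * a)]
    · change σ ^ 2 / 9 * (a + b + c) * b ≤ _
      linarith [mul_le_mul_of_nonneg_right pA (by positivity : 0 ≤ σ * b)]
    · change σ ^ 2 / 9 * (a + b + c) * c ≤ _
      linarith [mul_le_mul_of_nonneg_right pA (by positivity : 0 ≤ σ * c)]
  · refine convexHull_min ?_ (convex_closedBall _ _)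
    have tri : ∀ x y : EuclideanSpace ℝ (Fin 2), ‖(1 / 3 : ℝ) • (x + y)‖ ≤ ‖x‖ + ‖y‖ := by
      intro x y
      rw [norm_smul]
      have := norm_add_le x y
      have := norm_nonneg (x + y)
      norm_num
      linarith
    rintro p (rfl | rfl | rfl)
    · rw [mem_closedBall, dist_comm, dist_eq_norm]
      have := tri (v - p) (w - p)
      rw [show (1 / 3 : ℝ) • (v - p + (w - p)) = (1 / 3 : ℝ) • (p + v + w) - p by module] at this
      change _ ≤ c + b at this
      linarith
    · rw [mem_closedBall, dist_comm, dist_eq_norm]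
      have := tri (u - p) (w - p)
      rw [show (1 / 3 : ℝ) • (u - p + (w - p)) = (1 / 3 : ℝ) • (u + p + w) - p by module,
        norm_sub_rev u p] at this
      change _ ≤ c + a at this
      linarith
    · rw [mem_closedBall, dist_comm, dist_eq_norm]
      have := tri (u - p) (v - p)
      rw [show (1 / 3 : ℝ) • (u - p + (v - p)) = (1 / 3 : ℝ) • (u + v + p) - p by module,
        norm_sub_rev u p, norm_sub_rev v p] at this
      change _ ≤ b + a at this
      linarith

/-! ### Shifted dyadic grids and stabbing points -/

/-- The half-open square of side `r` that contains `x`, in the square grid of mesh `r` with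
origin `o`. -/
def gridCell (o : Fin 2 → ℝ) (r : ℝ) (x : EuclideanSpace ℝ (Fin 2)) :
    Set (EuclideanSpace ℝ (Fin 2)) :=
  {y | ∀ c, ⌊(y c - o c) / r⌋ = ⌊(x c - o c) / r⌋}

lemma gridCell_abs_sub_lt {o : Fin 2 → ℝ} {r : ℝ} (hr : 0 < r) {x y z : EuclideanSpace ℝ (Fin 2)}
    (hy : y ∈ gridCell o r x) (hz : z ∈ gridCell o r x) (c : Fin 2) : |y c - z c| < r := by
  have h := Int.abs_sub_lt_one_of_floor_eq_floor ((hy c).trans (hz c).symm)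
  rw [← sub_div, abs_div, abs_of_pos hr, div_lt_one hr] at h
  simpa using h

lemma dist_le_abs_add_abs (y z : EuclideanSpace ℝ (Fin 2)) :
    dist y z ≤ |y 0 - z 0| + |y 1 - z 1| := by
  rw [EuclideanSpace.dist_eq, Fin.sum_univ_two, Real.dist_eq, Real.dist_eq]
  refine Real.sqrt_le_iff.2 ⟨by positivity, ?_⟩
  nlinarith [mul_nonneg (abs_nonneg (y 0 - z 0)) (abs_nonneg (y 1 - z 1))]

/-- Dyadic cells are nested: the cell of level `k` is determined by any finer one. -/
lemma gridCell_subset {o : Fin 2 → ℝ} {R : ℝ} {k l : ℕ} (hkl : k ≤ l)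
    {x y z : EuclideanSpace ℝ (Fin 2)} (hx : z ∈ gridCell o (R / 2 ^ k) x)
    (hy : z ∈ gridCell o (R / 2 ^ l) y) : gridCell o (R / 2 ^ l) y ⊆ gridCell o (R / 2 ^ k) x := by
  obtain ⟨d, rfl⟩ := Nat.exists_eq_add_of_le hkl
  have key : ∀ t : ℝ, ⌊t / (R / 2 ^ k)⌋ = ⌊t / (R / 2 ^ (k + d))⌋ / ((2 ^ d : ℕ) : ℤ) := by
    intro t
    rw [← Int.floor_div_natCast]
    congr 1
    push_cast
    rw [pow_add]
    by_cases hR : R = 0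
    · simp [hR]
    · field_simp
  intro p hp c
  rw [← hx c, key, key, hp c, hy c]

/-- Of the two one-dimensional grids of mesh `R / 2 ^ k` with origins `0` and `R / 3`, one has no
grid point near `t`: grid points of the two are at distance at least a third of the mesh, because
`2 ^ k` is not divisible by `3`. -/
lemma exists_shift {R d : ℝ} {k : ℕ} (hd : 0 < d) (hR : 7 * d ≤ R / 2 ^ k) (t : ℝ) :
    ∃ b : Bool, ∀ y, |y - t| ≤ d →
      ⌊(y - (if b then R / 3 else 0)) / (R / 2 ^ k)⌋ =
        ⌊(t - (if b then R / 3 else 0)) / (R / 2 ^ k)⌋ := by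
  have hr : 0 < R / 2 ^ k := by linarith
  -- if the floor changes within distance `d` of `t`, then a grid point lies there
  have hnear : ∀ o y, |y - t| ≤ d → ⌊(y - o) / (R / 2 ^ k)⌋ ≠ ⌊(t - o) / (R / 2 ^ k)⌋ →
      ∃ m : ℤ, |m * (R / 2 ^ k) + o - t| ≤ d := by
    intro o y hy hne
    rw [abs_le] at hy
    rcases lt_or_gt_of_ne hne with h | h
    · refine ⟨⌊(t - o) / (R / 2 ^ k)⌋, ?_⟩
      have h1 := (le_div_iff₀ hr).1 (Int.floor_le ((t - o) / (R / 2 ^ k)))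
      have h2 := (div_lt_iff₀ hr).1 (Int.floor_lt.1 h)
      rw [abs_le]; constructor <;> linarith
    · refine ⟨⌊(y - o) / (R / 2 ^ k)⌋, ?_⟩
      have h1 := (le_div_iff₀ hr).1 (Int.floor_le ((y - o) / (R / 2 ^ k)))
      have h2 := (div_lt_iff₀ hr).1 (Int.floor_lt.1 h)
      rw [abs_le]; constructor <;> linarith
  by_contra! hcon
  obtain ⟨y, hy, hne⟩ := hcon false
  obtain ⟨y', hy', hne'⟩ := hcon true
  obtain ⟨m, hm⟩ := hnear _ y hy hne
  obtain ⟨m', hm'⟩ := hnear _ y' hy' hne'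
  simp only [Bool.false_eq_true, if_false, if_true] at hm hm'
  set r := R / 2 ^ k with hrdef
  have hRr : R = 2 ^ k * r := by rw [hrdef]; field_simp
  rw [abs_le] at hm hm'
  have h3 : |((3 * (m - m') - 2 ^ k : ℤ) : ℝ)| < 1 := by
    have hlt : |((3 * (m - m') - 2 ^ k : ℤ) : ℝ) * r| < 1 * r := by
      push_cast
      rw [abs_lt]
      constructor <;> nlinarith
    rw [abs_mul, abs_of_pos hr] at hlt
    exact lt_of_mul_lt_mul_right hlt hr.le
  rw [← Int.cast_abs] at h3
  have h4 : |3 * (m - m') - 2 ^ k| < 1 := by exact_mod_cast h3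
  rw [Int.abs_lt_one_iff] at h4
  have h5 : (3 : ℤ) ∣ 2 ^ k := ⟨m - m', by linarith⟩
  have h6 := Int.prime_three.dvd_of_dvd_pow h5
  norm_num at h6

/-- A convex set that contains a ball of radius `κ * d`, lies within distance `d` of its centre,
and has a point `q` at distance at most `2 * r` from `z₀`, where `r` is at most a constant times `d`,
contains one of `N` points that depend only on `z₀` and `r`: shrinking the set towards `q` gives a
ball of radius comparable to `r` centred within distance `3 * r` of `z₀`. -/
lemma exists_stabbing_points (κ : ℝ) (hκ0 : 0 < κ) (hκ1 : κ ≤ 1) :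
    ∃ N : ℕ, ∀ (z₀ : EuclideanSpace ℝ (Fin 2)) (r : ℝ), 0 < r →
      ∃ S : Finset (EuclideanSpace ℝ (Fin 2)), S.card ≤ N ∧
        ∀ (T : Set (EuclideanSpace ℝ (Fin 2))) (z : EuclideanSpace ℝ (Fin 2)) (d : ℝ),
          0 < d → Convex ℝ T → closedBall z (κ * d) ⊆ T → T ⊆ closedBall z d →
          κ / 196 * r ≤ d → (∃ q ∈ T, dist q z₀ ≤ 2 * r) → ∃ p ∈ S, p ∈ T := by
  classical
  obtain ⟨t, -, htfin, ht⟩ := finite_cover_balls_of_compact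
    (isCompact_closedBall (0 : EuclideanSpace ℝ (Fin 2)) 3) (e := κ * (κ / 196)) (by positivity)
  refine ⟨htfin.toFinset.card, fun z₀ r hr => ⟨htfin.toFinset.image (fun τ => z₀ + r • τ),
    Finset.card_image_le, ?_⟩⟩
  rintro T z d hd hconv hball hsub hrd ⟨q, hqT, hq⟩
  set s := κ / 196 * r / d with hs
  have hs0 : 0 < s := by positivity
  have hs1 : s ≤ 1 := (div_le_one hd).2 hrd
  have hsd : s * d = κ / 196 * r := by rw [hs]; field_simp
  have hqz : ‖z - q‖ ≤ d := by
    have := hsub hqT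
    rwa [mem_closedBall, dist_comm, dist_eq_norm] at this
  set q' := q + s • (z - q) with hq'
  have hq'z : ‖q' - z₀‖ ≤ 3 * r := by
    have h1 : q' - z₀ = (q - z₀) + s • (z - q) := by rw [hq']; abel
    have h2 : ‖s • (z - q)‖ ≤ r := by
      rw [norm_smul, Real.norm_of_nonneg hs0.le]
      have := mul_le_mul_of_nonneg_left hqz hs0.le
      nlinarith
    rw [h1]
    rw [dist_eq_norm] at hq
    linarith [norm_add_le (q - z₀) (s • (z - q))]
  have hmem : r⁻¹ • (q' - z₀) ∈ closedBall (0 : EuclideanSpace ℝ (Fin 2)) 3 := by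
    rw [mem_closedBall_zero_iff, norm_smul, norm_inv, Real.norm_of_nonneg hr.le,
      inv_mul_le_iff₀ hr]
    linarith
  obtain ⟨τ, hτ, hτd⟩ := Set.mem_iUnion₂.1 (ht hmem)
  refine ⟨z₀ + r • τ, Finset.mem_image.2 ⟨τ, htfin.mem_toFinset.2 hτ, rfl⟩, ?_⟩
  rw [mem_ball, dist_comm, dist_eq_norm] at hτd
  have hpq : ‖z₀ + r • τ - q'‖ ≤ s * (κ * d) := by
    have h1 : z₀ + r • τ - q' = r • (τ - r⁻¹ • (q' - z₀)) := by
      rw [smul_sub, smul_inv_smul₀ hr.ne']; abel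
    rw [h1, norm_smul, Real.norm_of_nonneg hr.le]
    have := mul_le_mul_of_nonneg_left hτd.le hr.le
    nlinarith
  have hz' : z + s⁻¹ • (z₀ + r • τ - q') ∈ T := by
    apply hball
    rw [mem_closedBall, dist_eq_norm, add_sub_cancel_left, norm_smul, norm_inv,
      Real.norm_of_nonneg hs0.le, inv_mul_le_iff₀ hs0]
    exact hpq
  have := hconv hqT hz' (sub_nonneg.2 hs1) hs0.le (by ring)
  convert this using 1
  rw [smul_add, smul_inv_smul₀ hs0.ne', hq']
  module

/-! ### The partition -/

theorem stmt6 (α : ℝ) (hα0 : 0 < α) (hα : α ≤ Real.pi / 3) :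
    ∃ c : ℝ, 0 < c ∧
      ∀ (n : ℕ), 1 ≤ n →
        ∀ (Δ : Fin n → Set (EuclideanSpace ℝ (Fin 2))),
          (∀ i, IsFatTriangle α (Δ i)) →
          ∃ Part : Finpartition (Finset.univ : Finset (Fin n)),
            (∀ P ∈ Part.parts, ∃ x : EuclideanSpace ℝ (Fin 2), ∀ i ∈ P, x ∈ Δ i) ∧
            (∀ x : EuclideanSpace ℝ (Fin 2),
              (({P : Finset (Fin n) | P ∈ Part.parts ∧ ∃ i ∈ P, x ∈ Δ i}).ncard : ℝ)
                ≤ c * (Real.logb 2 n + 1)) := by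
  classical
  have hσ : 0 < Real.sin α := Real.sin_pos_of_pos_of_lt_pi hα0 (by linarith [Real.pi_pos])
  have hκ0 : 0 < Real.sin α ^ 2 / 9 := by positivity
  have hκ1 : Real.sin α ^ 2 / 9 ≤ 1 := by linarith [Real.sin_sq_le_one α]
  obtain ⟨N, hstab⟩ := exists_stabbing_points _ hκ0 hκ1
  refine ⟨4 * N + 1, by positivity, fun n hn Δ hΔ => ?_⟩
  choose z d hd hconv hball hsub using fun i => (hΔ i).exists_ball hα0
  set κ := Real.sin α ^ 2 / 9
  set R : ℝ := ∑ i, 7 * d i with hR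
  have hdR : ∀ i, 7 * d i ≤ R := fun i =>
    Finset.single_le_sum (f := fun i => 7 * d i) (fun j _ => by linarith [hd j])
      (Finset.mem_univ i)
  have hlevel : ∀ i, ∃ k : ℕ, 7 * d i ≤ R / 2 ^ k ∧ R / 2 ^ k < 14 * d i := by
    intro i
    have hdi := hd i
    obtain ⟨k, hk1, hk2⟩ := exists_nat_pow_near (x := R / (7 * d i)) (y := 2)
      ((one_le_div (by positivity)).2 (hdR i)) (by norm_num)
    rw [le_div_iff₀ (by positivity)] at hk1
    rw [div_lt_iff₀ (by positivity), pow_succ] at hk2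
    refine ⟨k, ?_, ?_⟩
    · rw [le_div_iff₀ (by positivity)]; linarith
    · rw [div_lt_iff₀ (by positivity)]; linarith
  choose k hk1 hk2 using hlevel
  have hr : ∀ i, 0 < R / 2 ^ k i := fun i => by linarith [hk1 i, hd i]
  choose b hb using fun i (c : Fin 2) => exists_shift (hd i) (hk1 i) (z i c)
  set o : (Fin 2 → Bool) → Fin 2 → ℝ := fun σ c => if σ c then R / 3 else 0
  set Q : (Fin 2 → Bool) → Fin n → Set (EuclideanSpace ℝ (Fin 2)) :=
    fun σ i => gridCell (o σ) (R / 2 ^ k i) (z i) with hQ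
  have hzΔ : ∀ i, z i ∈ Δ i := fun i =>
    hball i (mem_closedBall_self (mul_nonneg hκ0.le (hd i).le))
  have hcover : ∀ σ : Fin 2 → Bool, ∃ F : Set (Finset (Fin n)), F.Finite ∧
      (∀ i, b i = σ → ∃ P ∈ F, i ∈ P) ∧ (∀ P ∈ F, ∃ x, ∀ i ∈ P, x ∈ Δ i) ∧
      (∀ x, {P ∈ F | ∃ i ∈ P, x ∈ Δ i}.ncard ≤ N * (Nat.log 2 n + 1)) := by
    intro σ
    have hΔQ : ∀ i, b i = σ → Δ i ⊆ Q σ i := by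
      rintro i rfl y hy c
      refine hb i c (y c) ?_
      have h1 := hsub i hy
      rw [mem_closedBall, dist_eq_norm] at h1
      exact (PiLp.norm_apply_le (y - z i) c).trans h1
    have hS : ∀ A, ∃ S : Finset (EuclideanSpace ℝ (Fin 2)), S.card ≤ N ∧
        ((∃ j, b j = σ ∧ Q σ j = A) → ∀ i, b i = σ → A ⊆ Q σ i → (Δ i ∩ A).Nonempty →
          ∃ p ∈ S, p ∈ Δ i) := by
      intro A
      by_cases hA : ∃ j, b j = σ ∧ Q σ j = A
      · obtain ⟨j, hj, rfl⟩ := hA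
        obtain ⟨S, hcard, hSp⟩ := hstab (z j) (R / 2 ^ k j) (hr j)
        refine ⟨S, hcard, fun _ i hi hji hmeet => ?_⟩
        obtain ⟨q, hqΔ, hqQ⟩ := hmeet
        refine hSp (Δ i) (z i) (d i) (hd i) (hconv i) (hball i) (hsub i) ?_ ⟨q, hqΔ, ?_⟩
        · -- the ball inside `Δ j` fits into the cell of `Δ i`, so that cell is not too small
          have hκd : 0 ≤ κ * d j := mul_nonneg hκ0.le (hd j).le
          have h1 : z j + EuclideanSpace.single 0 (κ * d j) ∈ Δ j := by
            apply hball j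
            rw [mem_closedBall, dist_eq_norm, add_sub_cancel_left, PiLp.norm_single,
              Real.norm_of_nonneg hκd]
          have h2 := gridCell_abs_sub_lt (hr i) (hji (hΔQ j hj h1)) (hji (hΔQ j hj (hzΔ j))) 0
          simp only [PiLp.add_apply, PiLp.single_apply, if_true, add_sub_cancel_left,
            abs_of_nonneg hκd] at h2
          have h3 := mul_le_mul_of_nonneg_left (hk2 j).le hκ0.le
          have h4 := hk2 i
          linarith
        · have hself := hΔQ j hj (hzΔ j)
          have h0 := gridCell_abs_sub_lt (hr j) hqQ hself 0
          have h1 := gridCell_abs_sub_lt (hr j) hqQ hself 1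
          linarith [dist_le_abs_add_abs q (z j)]
      · exact ⟨∅, by simp, fun h => absurd h hA⟩
    choose S hScard hSp using hS
    set s : Finset (Fin n) := {i | b i = σ}
    have hs : ∀ i ∈ s, b i = σ := fun i hi => (Finset.mem_filter.1 hi).2
    obtain ⟨F, hF, -, hcov, hst, hply⟩ := exists_cover_of_laminar Δ (Q σ) S N hScard
      (Nat.log 2 n + 1) s (fun i hi => hΔQ i (hs i hi)) (fun i _ => ⟨z i, hzΔ i⟩)
      (by
        rintro i - j - ⟨y, hyi, hyj⟩
        rcases le_total (k i) (k j) with h | h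
        · exact Or.inr (gridCell_subset h hyi hyj)
        · exact Or.inl (gridCell_subset h hyj hyi))
      (fun i hi j hj => hSp (Q σ j) ⟨j, hs j hj, rfl⟩ i (hs i hi))
      (by
        intro i _
        calc _ ≤ (Set.univ : Set (Fin n)).ncard :=
              Set.ncard_le_ncard (Set.subset_univ _) Set.finite_univ
          _ = n := by simp [Set.ncard_univ]
          _ < _ := Nat.lt_pow_succ_log_self (by norm_num) n)
    exact ⟨F, hF, fun i hi => hcov i (Finset.mem_filter.2 ⟨Finset.mem_univ _, hi⟩), hst, hply⟩
  choose F hF hcov hst hply using hcover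
  obtain ⟨Part, hP1, hP2⟩ := exists_finpartition_of_cover Δ (⋃ σ, F σ) (Set.finite_iUnion hF)
    (fun i => by
      obtain ⟨P, hP, hiP⟩ := hcov (b i) i rfl
      exact ⟨P, Set.mem_iUnion.2 ⟨_, hP⟩, hiP⟩)
    (fun P hP => by
      obtain ⟨σ, hσP⟩ := Set.mem_iUnion.1 hP
      exact hst σ P hσP)
    (4 * (N * (Nat.log 2 n + 1)))
    (fun x => by
      have h1 : {P ∈ ⋃ σ, F σ | ∃ i ∈ P, x ∈ Δ i} = ⋃ σ, {P ∈ F σ | ∃ i ∈ P, x ∈ Δ i} := by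
        ext P; simp
      rw [h1]
      refine (Set.ncard_iUnion_le_of_fintype _).trans ?_
      refine (Finset.sum_le_sum fun σ _ => hply σ x).trans ?_
      simp)
  refine ⟨Part, hP1, fun x => ?_⟩
  have h1 : (({P : Finset (Fin n) | P ∈ Part.parts ∧ ∃ i ∈ P, x ∈ Δ i}).ncard : ℝ) ≤
      4 * (N * (Nat.log 2 n + 1)) := by exact_mod_cast hP2 x
  have h2 : (Nat.log 2 n : ℝ) ≤ Real.logb 2 n := by exact_mod_cast Real.natLog_le_logb n 2
  have h3 : (0 : ℝ) ≤ Nat.log 2 n := by positivity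
  calc _ ≤ 4 * (N * (Nat.log 2 n + 1) : ℝ) := h1
    _ ≤ (4 * N + 1) * ((Nat.log 2 n : ℝ) + 1) := by nlinarith
    _ ≤ _ := by gcongr
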